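/- arXiv:1805.05678 — 3 statements merged into one kernel-verified Lean document; each statement's English description precedes it below -/
import Mathlib

section
/- Let p be an odd prime, k a field of characteristic p, and σ the k-automorphism of the rational function field k(y₁,…,y_{p-1}) given by σ(y₁) = y₂, …, σ(y_{p-2}) = y_{p-1}, σ(y_{p-1}) = 1 − (y₁ + ⋯ + y_{p-1}). Then the fixed field k(y₁,…,y_{p-1})^⟨σ⟩ is purely transcendental over k. -/
set_option maxHeartbeats 1000000
set_option synthInstance.maxHeartbeats 400000

/-- A field extension `F` of `k` is `k`-rational (purely transcendental over `k`)
if it is `k`-isomorphic to a rational function field in finitely many variables. -/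
def IsKRational (k F : Type*) [Field k] [Field F] [Algebra k F] : Prop :=
  ∃ n : ℕ, Nonempty (F ≃ₐ[k] FractionRing (MvPolynomial (Fin n) k))

/-!
Put `y_p = 1 - (y₁ + ⋯ + y_{p-1})`, so that `σ` permutes `y₁, …, y_p` cyclically and they sum to
`1`. Regard the `y`'s as the weights of a measure of total mass `1` on `𝔽_p`, which `σ` translates.
Translation lowers the mean `μ` by `1` and fixes every central moment `w_m`, and `w₀ = 1`,
`w₁ = 0`, `w_p = μ - μ ^ p`. Let `E = k(w₂, …, w_p)`. The indicator function of a point of `𝔽_p` is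
a polynomial of degree `p - 1`, so the weights are recovered from `μ` and `w₀, …, w_{p-1}`; hence
the whole field is `E(μ)`, of degree at most `p` over `E`. As `μ` has `p` conjugates under `σ`, the
field `E` is the fixed field, and its `p - 1` generators are algebraically independent by counting
transcendence degrees. Nothing changes for the additive group of any finite field in place of `𝔽_p`.
-/

open IntermediateField Polynomial

section Moments

variable {F L L' : Type*} [CommRing F] [Fintype F] [CommRing L] [Algebra F L] [CommRing L']
  [Algebra F L']

/-- The `m`-th moment about `c` of the `L`-valued measure on the finite ring `F` that gives the
point `a` the weight `Y a`. -/
def moment (Y : F → L) (c : L) (m : ℕ) : L :=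
  ∑ a, (algebraMap F L a - c) ^ m * Y a

/-- The mean of the measure with weights `Y` (not normalised by the total mass). -/
def mean (Y : F → L) : L :=
  moment Y 0 1

theorem moment_zero (Y : F → L) (c : L) : moment Y c 0 = ∑ a, Y a := by
  simp only [moment, pow_zero, one_mul]

theorem moment_one (Y : F → L) (c : L) : moment Y c 1 = mean Y - c * ∑ a, Y a := by
  simp only [mean, moment, pow_one, sub_zero, sub_mul, Finset.sum_sub_distrib, Finset.mul_sum]

theorem map_moment (f : L →ₐ[F] L') (Y : F → L) (c : L) (m : ℕ) :
    f (moment Y c m) = moment (f ∘ Y) (f c) m := by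
  simp only [moment, map_sum, map_mul, map_pow, map_sub, AlgHom.commutes, Function.comp_apply]

theorem moment_comp_add_right (Y : F → L) (a : F) (c : L) (m : ℕ) :
    moment (fun b => Y (b + a)) c m = moment Y (c + algebraMap F L a) m := by
  refine Fintype.sum_equiv (Equiv.addRight a) _ _ fun b => ?_
  rw [Equiv.coe_addRight, map_add, add_sub_add_right_eq_sub]

theorem moment_eq_sum_moment (Y : F → L) (c d : L) (n : ℕ) :
    moment Y d n =
      ∑ m ∈ Finset.range (n + 1), (c - d) ^ (n - m) * n.choose m * moment Y c m := by
  simp only [moment, Finset.mul_sum]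
  rw [Finset.sum_comm]
  refine Finset.sum_congr rfl fun a _ => ?_
  rw [← sub_add_sub_cancel _ c d, add_pow, Finset.sum_mul]
  exact Finset.sum_congr rfl fun m _ => by ring

end Moments

section MomentsFiniteField

variable {F L : Type*} [Field F] [Fintype F] [CommRing L] [Algebra F L]

theorem moment_card (Y : F → L) (c : L) :
    moment Y c (Fintype.card F) = mean Y - c ^ Fintype.card F * ∑ a, Y a := by
  have hfrob (a : F) : (algebraMap F L a - c) ^ Fintype.card F =
      algebraMap F L a - c ^ Fintype.card F := by
    rw [← FiniteField.frobeniusAlgHom_apply, map_sub, AlgHom.commutes,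
      FiniteField.frobeniusAlgHom_apply]
  simp only [moment, hfrob, mean, pow_one, sub_zero, sub_mul, Finset.sum_sub_distrib,
    Finset.mul_sum]

theorem eq_sum_sub_moment_card_sub_one (Y : F → L) (b : F) :
    Y b = ∑ a, Y a - moment Y (algebraMap F L b) (Fintype.card F - 1) := by
  classical
  have hq : Fintype.card F - 1 ≠ 0 := Nat.sub_ne_zero_of_lt Fintype.one_lt_card
  rw [moment, ← Finset.sum_sub_distrib, Fintype.sum_eq_single b fun a hab => ?_]
  · rw [sub_self, zero_pow hq, zero_mul, sub_zero]
  · rw [← map_sub, ← map_pow, FiniteField.pow_card_sub_one_eq_one _ (sub_ne_zero.mpr hab), map_one,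
      one_mul, sub_self]

end MomentsFiniteField

section Fields

variable {k L : Type*} [Field k] [Field L] [Algebra k L]

theorem isKRational_adjoin_range {n : ℕ} (x : Fin n → L)
    (halg : Algebra.IsAlgebraic (adjoin k (Set.range x)) L) (hn : n ≤ Algebra.trdeg k L) :
    IsKRational k (adjoin k (Set.range x)) := by
  have : Algebra.IsAlgebraic (Algebra.adjoin k (Set.range x)) L :=
    isAlgebraic_adjoin_iff_top.mp halg
  have hx : IsTranscendenceBasis k x :=
    Algebra.IsAlgebraic.isTranscendenceBasis_of_lift_le_trdeg_of_finite k x (by simpa using hn)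
  exact ⟨n, ⟨hx.1.aevalEquivField.symm⟩⟩

theorem algebraicIndependent_algebraMap_X (ι : Type*) :
    AlgebraicIndependent k fun i : ι => algebraMap (MvPolynomial ι k)
      (FractionRing (MvPolynomial ι k)) (MvPolynomial.X i) :=
  (MvPolynomial.algebraicIndependent_X ι k).map' (f := IsScalarTower.toAlgHom k _ _)
    (IsFractionRing.injective _ _)

theorem adjoin_range_algebraMap_X_eq_top (ι : Type*) :
    adjoin k (Set.range fun i : ι => algebraMap (MvPolynomial ι k)
      (FractionRing (MvPolynomial ι k)) (MvPolynomial.X i)) = ⊤ := by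
  rw [← AlgHom.fieldRange_eq_top (f := AlgHom.id k _) |>.mpr Function.surjective_id]
  refine (IsFractionRing.algHom_fieldRange_eq_of_comp_eq_of_range_eq
    (g := IsScalarTower.toAlgHom k (MvPolynomial ι k) _) rfl ?_).symm
  rw [← Algebra.map_top, ← MvPolynomial.adjoin_range_X, AlgHom.map_adjoin, ← Set.range_comp]
  rfl

theorem finiteDimensional_of_adjoin_simple_eq_top {x : L} (hx : IsIntegral k x) (htop : k⟮x⟯ = ⊤) :
    FiniteDimensional k L := by
  have := adjoin.finiteDimensional hx
  rw [htop] at this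
  exact topEquiv.toLinearEquiv.finiteDimensional

theorem finrank_le_natDegree_of_adjoin_simple_eq_top {x : L} (htop : k⟮x⟯ = ⊤) {f : k[X]}
    (hf : f.Monic) (hfx : aeval x f = 0) : Module.finrank k L ≤ f.natDegree := by
  rw [← finrank_top', ← htop, adjoin.finrank ⟨f, hf, hfx⟩]
  exact natDegree_le_natDegree (minpoly.min k x hf hfx)

theorem card_le_finrank_fixedField {ι : Type*} [Fintype ι] (H : Subgroup (L ≃ₐ[k] L))
    [FiniteDimensional (fixedField H) L] {x : L} {c : ι → L} (hc : Function.Injective c)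
    (hcx : ∀ i, ∃ σ ∈ H, σ x = c i) : Fintype.card ι ≤ Module.finrank (fixedField H) L := by
  choose σ hσ hσx using hcx
  let τ (i : ι) : L ≃ₐ[fixedField H] L :=
    fixingSubgroupEquiv _ ⟨σ i, (le_iff_le H _).mp le_rfl (hσ i)⟩
  have hτ : Function.Injective τ := fun i j hij =>
    hc <| by rw [← hσx i, ← hσx j]; exact DFunLike.congr_fun hij x
  exact (Fintype.card_le_of_injective τ hτ).trans AlgEquiv.card_le

theorem fixedField_eq_of_natDegree_le_card {ι : Type*} [Fintype ι] {H : Subgroup (L ≃ₐ[k] L)}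
    {E : IntermediateField k L} (hE : E ≤ fixedField H) {x : L} (htop : E⟮x⟯ = ⊤) {f : E[X]}
    (hf : f.Monic) (hfx : aeval x f = 0) {c : ι → L} (hc : Function.Injective c)
    (hcx : ∀ i, ∃ σ ∈ H, σ x = c i) (hcard : f.natDegree ≤ Fintype.card ι) : fixedField H = E := by
  have : FiniteDimensional E L := finiteDimensional_of_adjoin_simple_eq_top ⟨f, hf, hfx⟩ htop
  have : FiniteDimensional (fixedField H) L := by
    let : Algebra E (fixedField H) := (inclusion hE).toAlgebra
    have : IsScalarTower E (fixedField H) L := .of_algebraMap_eq fun _ => rfl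
    exact .right E (fixedField H) L
  refine (eq_of_le_of_finrank_le' hE ?_).symm
  exact (finrank_le_natDegree_of_adjoin_simple_eq_top htop hf hfx).trans
    (hcard.trans (card_le_finrank_fixedField H hc hcx))

end Fields

section CentralMoments

variable (k : Type*) {F L : Type*} [Field F] [Fintype F] [Field k] [Field L] [Algebra F L]
  [Algebra k L]

/-- The subfield generated over `k` by the central moments of orders `2, …, |F|` of the measure
with weights `Y`. -/
def centralMomentField (Y : F → L) : IntermediateField k L :=
  adjoin k (Set.range fun i : Fin (Fintype.card F - 1) => moment Y (mean Y) (i + 2))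

variable {k} {Y : F → L}

theorem moment_mean_mem_centralMomentField (hY : ∑ a, Y a = 1) {m : ℕ} (hm : m ≤ Fintype.card F) :
    moment Y (mean Y) m ∈ centralMomentField k Y := by
  match m with
  | 0 => rw [moment_zero, hY]; exact one_mem _
  | 1 => rw [moment_one, hY, mul_one, sub_self]; exact zero_mem _
  | m + 2 => exact subset_adjoin k _ ⟨⟨m, by omega⟩, rfl⟩

theorem exists_monic_aeval_mean_eq_zero (hY : ∑ a, Y a = 1) :
    ∃ f : (centralMomentField k Y)[X],
      f.Monic ∧ aeval (mean Y) f = 0 ∧ f.natDegree = Fintype.card F := by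
  let w : centralMomentField k Y := ⟨_, moment_mean_mem_centralMomentField hY le_rfl⟩
  have hdeg : (X - C w).degree < (Fintype.card F : WithBot ℕ) := by
    rw [degree_X_sub_C]
    exact_mod_cast Fintype.one_lt_card
  refine ⟨X ^ Fintype.card F - (X - C w), monic_X_pow_sub hdeg, ?_, ?_⟩
  · have hw : algebraMap _ L w = mean Y - mean Y ^ Fintype.card F := by
      rw [← mul_one (mean Y ^ _), ← hY]
      exact moment_card Y (mean Y)
    rw [map_sub, map_sub, map_pow, aeval_X, aeval_C, hw, sub_sub_cancel, sub_self]
  · exact natDegree_eq_of_degree_eq_some ((degree_sub_eq_left_of_degree_lt (by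
      rwa [degree_X_pow])).trans (degree_X_pow _))

theorem adjoin_mean_eq_top [Algebra F k] [IsScalarTower F k L] (hY : ∑ a, Y a = 1)
    (hgen : adjoin k (Set.range Y) = ⊤) :
    (centralMomentField k Y)⟮mean Y⟯ = ⊤ := by
  set E := centralMomentField k Y
  suffices h : Set.range Y ⊆ (E⟮mean Y⟯.restrictScalars k : Set L) by
    rw [← adjoin_le_iff, hgen] at h
    exact restrictScalars_injective k (top_le_iff.mp h)
  rintro _ ⟨b, rfl⟩
  have hE {x : L} (hx : x ∈ E) : x ∈ E⟮mean Y⟯ := E⟮mean Y⟯.algebraMap_mem ⟨x, hx⟩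
  have hF (a : F) : algebraMap F L a ∈ E⟮mean Y⟯ := hE <| by
    rw [IsScalarTower.algebraMap_apply F k L]
    exact E.algebraMap_mem _
  change Y b ∈ E⟮mean Y⟯
  rw [eq_sum_sub_moment_card_sub_one Y b, hY, moment_eq_sum_moment Y (mean Y)]
  refine sub_mem (one_mem _) (sum_mem fun m hm => mul_mem (mul_mem (pow_mem (sub_mem
    (mem_adjoin_simple_self E _) (hF b)) _) (IntermediateField.natCast_mem _ _))
    (hE (moment_mean_mem_centralMomentField hY ?_)))
  have := Finset.mem_range.mp hm
  omega

end CentralMoments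

section Translations

variable {k F L : Type*} [Field F] [Fintype F] [Field k] [Field L] [Algebra F k] [Algebra F L]
  [Algebra k L] [IsScalarTower F k L] {Y : F → L} {σ : L ≃ₐ[k] L} {a : F}

theorem map_moment_of_translation (hσ : ∀ b, σ (Y b) = Y (b + a)) (c : L) (m : ℕ) :
    σ (moment Y c m) = moment Y (σ c + algebraMap F L a) m := by
  rw [← moment_comp_add_right, ← funext hσ]
  exact map_moment ((σ : L →ₐ[k] L).restrictScalars F) Y c m

theorem map_mean_of_translation (hY : ∑ a, Y a = 1) (hσ : ∀ b, σ (Y b) = Y (b + a)) :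
    σ (mean Y) = mean Y - algebraMap F L a := by
  rw [mean, map_moment_of_translation hσ, moment_one, map_zero, zero_add, hY, mul_one, mean]

theorem map_moment_mean_of_translation (hY : ∑ a, Y a = 1) (hσ : ∀ b, σ (Y b) = Y (b + a))
    (m : ℕ) : σ (moment Y (mean Y) m) = moment Y (mean Y) m := by
  rw [map_moment_of_translation hσ, map_mean_of_translation hY hσ, sub_add_cancel]

variable {H : Subgroup (L ≃ₐ[k] L)}

theorem centralMomentField_le_fixedField (hY : ∑ a, Y a = 1)
    (hH : ∀ σ ∈ H, ∃ a, ∀ b, σ (Y b) = Y (b + a)) : centralMomentField k Y ≤ fixedField H := by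
  rw [centralMomentField, adjoin_le_iff]
  rintro _ ⟨i, rfl⟩
  refine (mem_fixedField_iff H _).mpr fun σ hσ => ?_
  obtain ⟨a, ha⟩ := hH σ hσ
  exact map_moment_mean_of_translation hY ha _

theorem fixedField_eq_centralMomentField (hY : ∑ a, Y a = 1)
    (hgen : adjoin k (Set.range Y) = ⊤) (hH : ∀ σ ∈ H, ∃ a, ∀ b, σ (Y b) = Y (b + a))
    (hsurj : ∀ a, ∃ σ ∈ H, ∀ b, σ (Y b) = Y (b + a)) :
    fixedField H = centralMomentField k Y := by
  obtain ⟨f, hf, hfx, hdeg⟩ := exists_monic_aeval_mean_eq_zero (k := k) hY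
  refine fixedField_eq_of_natDegree_le_card (centralMomentField_le_fixedField hY hH)
    (adjoin_mean_eq_top hY hgen) hf hfx
    (c := fun a => mean Y - algebraMap F L a)
    (sub_right_injective.comp (algebraMap F L).injective) (fun a => ?_) hdeg.le
  obtain ⟨σ, hσ, ha⟩ := hsurj a
  exact ⟨σ, hσ, map_mean_of_translation hY ha⟩

theorem isKRational_fixedField_of_translations (hY : ∑ a, Y a = 1)
    (hgen : adjoin k (Set.range Y) = ⊤) (htrdeg : (Fintype.card F - 1 : ℕ) ≤ Algebra.trdeg k L)
    (hH : ∀ σ ∈ H, ∃ a, ∀ b, σ (Y b) = Y (b + a))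
    (hsurj : ∀ a, ∃ σ ∈ H, ∀ b, σ (Y b) = Y (b + a)) : IsKRational k (fixedField H) := by
  obtain ⟨f, hf, hfx, -⟩ := exists_monic_aeval_mean_eq_zero (k := k) hY
  have : FiniteDimensional (centralMomentField k Y) L :=
    finiteDimensional_of_adjoin_simple_eq_top ⟨f, hf, hfx⟩ (adjoin_mean_eq_top hY hgen)
  rw [fixedField_eq_centralMomentField hY hgen hH hsurj]
  exact isKRational_adjoin_range _ (.of_finite (centralMomentField k Y) L) htrdeg

end Translations

section Cyclic

theorem zpow_smul_eq_add_intCast {G X A : Type*} [Group G] [MulAction G X] [AddGroupWithOne A]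
    {Y : A → X} {σ : G} (hσ : ∀ b, σ • Y b = Y (b + 1)) (n : ℤ) (b : A) :
    σ ^ n • Y b = Y (b + n) := by
  induction n generalizing b with
  | zero => rw [zpow_zero, one_smul, Int.cast_zero, add_zero]
  | succ n ih =>
    rw [add_comm, zpow_one_add, mul_smul, ih, hσ, add_assoc, ← Int.cast_one, ← Int.cast_add,
      add_comm 1]
  | pred n ih =>
    have hpow : σ ^ (-n - 1 : ℤ) = σ⁻¹ * σ ^ (-n : ℤ) := by
      rw [sub_eq_neg_add, zpow_add, zpow_neg_one]
    rw [hpow, mul_smul, ih, inv_smul_eq_iff, hσ, Int.cast_sub, Int.cast_one, add_assoc,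
      sub_add_cancel]

variable {k L : Type*} [Field k] [Field L] [Algebra k L]

theorem isKRational_fixedField_zpowers {p : ℕ} [Fact p.Prime] [CharP k p] {Y : ZMod p → L}
    (hY : ∑ a, Y a = 1) (hgen : adjoin k (Set.range Y) = ⊤)
    (htrdeg : (p - 1 : ℕ) ≤ Algebra.trdeg k L) {σ : L ≃ₐ[k] L}
    (hσ : ∀ b, σ (Y b) = Y (b + 1)) : IsKRational k (fixedField (Subgroup.zpowers σ)) := by
  let : Algebra (ZMod p) k := ZMod.algebra k p
  let : Algebra (ZMod p) L := ((algebraMap k L).comp (algebraMap (ZMod p) k)).toAlgebra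
  have : IsScalarTower (ZMod p) k L := .of_algebraMap_eq fun _ => rfl
  refine isKRational_fixedField_of_translations hY hgen (by rwa [ZMod.card]) ?_ fun a => ?_
  · rintro _ ⟨n, rfl⟩
    exact ⟨n, zpow_smul_eq_add_intCast (σ := σ) hσ n⟩
  · obtain ⟨n, rfl⟩ := ZMod.intCast_surjective a
    exact ⟨σ ^ n, ⟨n, rfl⟩, zpow_smul_eq_add_intCast (σ := σ) hσ n⟩

end Cyclic

section Completion

variable {L : Type*} [AddCommGroup L] [One L] {n : ℕ}

/-- The tuple `y` followed by the entry that makes its sum equal to `1`. -/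
def completeToSumOne (y : Fin n → L) : Fin (n + 1) → L :=
  Fin.snoc y (1 - ∑ i, y i)

theorem completeToSumOne_castSucc (y : Fin n → L) (i : Fin n) :
    completeToSumOne y i.castSucc = y i :=
  Fin.snoc_castSucc ..

theorem completeToSumOne_last (y : Fin n → L) :
    completeToSumOne y (Fin.last n) = 1 - ∑ i, y i :=
  Fin.snoc_last ..

theorem sum_completeToSumOne (y : Fin n → L) : ∑ i, completeToSumOne y i = 1 := by
  simp only [Fin.sum_univ_castSucc, completeToSumOne_castSucc, completeToSumOne_last,
    add_sub_cancel]

theorem range_subset_range_completeToSumOne (y : Fin n → L) :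
    Set.range y ⊆ Set.range (completeToSumOne y) := by
  rintro _ ⟨i, rfl⟩
  exact ⟨i.castSucc, completeToSumOne_castSucc y i⟩

theorem map_completeToSumOne {R : Type*} [NonAssocRing R] {y : Fin n → R} {σ : R →+* R}
    (hσ : ∀ i j : Fin n, (j : ℕ) = i + 1 → σ (y i) = y j)
    (hσlast : ∀ i : Fin n, (i : ℕ) = n - 1 → σ (y i) = 1 - ∑ j, y j) (i : Fin (n + 1)) :
    σ (completeToSumOne y i) = completeToSumOne y (i + 1) := by
  have hsucc (i : Fin n) : σ (y i) = completeToSumOne y i.succ := by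
    by_cases hi : (i : ℕ) + 1 < n
    · exact (hσ i ⟨i + 1, hi⟩ rfl).trans (completeToSumOne_castSucc y _).symm
    · have hlast : i.succ = Fin.last n := Fin.ext (by simp only [Fin.val_succ, Fin.val_last]; omega)
      rw [hσlast i (by omega), hlast, completeToSumOne_last]
  induction i using Fin.lastCases with
  | cast i => rw [Fin.coeSucc_eq_succ, ← hsucc, completeToSumOne_castSucc]
  | last =>
    have hsum := Fin.sum_univ_succ (completeToSumOne y)
    simp only [sum_completeToSumOne, ← hsucc] at hsum
    rw [Fin.last_add_one, completeToSumOne_last, map_sub, map_one, map_sum]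
    exact sub_eq_of_eq_add hsum

end Completion

theorem stmt2_general (k : Type*) [Field k] (p : ℕ) (hp : p.Prime) [CharP k p] {L : Type*}
    [Field L] [Algebra k L] (y : Fin (p - 1) → L) (hind : AlgebraicIndependent k y)
    (hgen : adjoin k (Set.range y) = ⊤) (σ : L ≃ₐ[k] L)
    (hσ : ∀ i j : Fin (p - 1), (j : ℕ) = (i : ℕ) + 1 → σ (y i) = y j)
    (hσlast : ∀ i : Fin (p - 1), (i : ℕ) = p - 2 → σ (y i) = 1 - ∑ j, y j) :
    IsKRational k (fixedField (Subgroup.zpowers σ)) := by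
  have := Fact.mk hp
  obtain ⟨n, rfl⟩ := Nat.exists_eq_add_one_of_ne_zero hp.ne_zero
  refine isKRational_fixedField_zpowers (p := n + 1) (Y := completeToSumOne y)
    (sum_completeToSumOne y) ?_ ?_ (map_completeToSumOne (σ := (σ : L →+* L)) hσ hσlast)
  · exact top_le_iff.mp (hgen ▸ adjoin.mono k _ _ (range_subset_range_completeToSumOne y))
  · simpa using hind.lift_cardinalMk_le_trdeg

/-- for `p` an odd prime and `char k = p`, the fixed field of the
automorphism `σ : y₁ ↦ y₂ ↦ ⋯ ↦ y_{p-1} ↦ 1 - (y₁ + ⋯ + y_{p-1})` of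
`k(y₁,…,y_{p-1})` is purely transcendental over `k`. -/
theorem stmt2 (k : Type*) [Field k] (p : ℕ) (hp : p.Prime) (hodd : Odd p) [CharP k p]
    (y : Fin (p - 1) → FractionRing (MvPolynomial (Fin (p - 1)) k))
    (hy : ∀ i, y i = algebraMap (MvPolynomial (Fin (p - 1)) k)
      (FractionRing (MvPolynomial (Fin (p - 1)) k)) (MvPolynomial.X i))
    (σ : FractionRing (MvPolynomial (Fin (p - 1)) k) ≃ₐ[k]
         FractionRing (MvPolynomial (Fin (p - 1)) k))
    (hσ : ∀ i j : Fin (p - 1), (j : ℕ) = (i : ℕ) + 1 → σ (y i) = y j)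
    (hσlast : ∀ i : Fin (p - 1), (i : ℕ) = p - 2 → σ (y i) = 1 - ∑ j, y j) :
    IsKRational k (IntermediateField.fixedField (Subgroup.zpowers σ)) := by
  obtain rfl := funext hy
  exact stmt2_general k p hp _ (algebraicIndependent_algebraMap_X _)
    (adjoin_range_algebraMap_X_eq_top _) σ hσ hσlast
end

section
/- Let p be an odd prime, k a field of characteristic different from p, and σ the k-automorphism of k(y₁,…,y_{p-1}) defined by σ(y₁)=y₂, …, σ(y_{p-2})=y_{p-1}, σ(y_{p-1}) = 1 − Σ_{i=1}^{p-1} y_i. Let z be transcendental over k(y₁,…,y_{p-1})^⟨σ⟩, with σ extended by σ(z)=z. Then k(y₁,…,y_{p-1})^⟨σ⟩(z) is k-isomorphic to k(C_p), the fixed field of the cyclic group of order p acting by cyclically permuting the variables of k(x₀,…,x_{p-1}). -/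
set_option maxHeartbeats 1000000
set_option synthInstance.maxHeartbeats 1000000

/-
Let `s = x₀ + ⋯ + xₙ`. The ratios `vᵢ = xᵢ / s` satisfy `v₀ + ⋯ + vₙ = 1`, so `v₀, …, vₙ₋₁` are
`n` independent parameters on which the cyclic shift `τ` acts exactly as the affine map `σ` acts on
the `yᵢ`, while `s` itself is fixed. Hence `k(x) = k(v)(s)` with `τ` acting on the coefficients of
rational functions in `s` as `σ` and trivially on `s`. A `τ`-invariant fraction written in lowest
terms with monic denominator has `σ`-invariant coefficients by uniqueness of that form, so the fixed
field is `k(v)^⟨σ⟩(s)`.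
-/

open IntermediateField Polynomial

section FixedField

variable {k K L : Type*} [Field k] [Field K] [Field L] [Algebra k K] [Algebra k L]

theorem mem_fixedField_zpowers_iff {τ : L ≃ₐ[k] L} {a : L} :
    a ∈ fixedField (Subgroup.zpowers τ) ↔ τ a = a := by
  rw [IntermediateField.mem_fixedField_iff]
  refine ⟨fun h => h τ (Subgroup.mem_zpowers τ), fun h f hf => ?_⟩
  have hle : Subgroup.zpowers τ ≤ MulAction.stabilizer (L ≃ₐ[k] L) a :=
    Subgroup.zpowers_le.2 h
  exact hle hf

theorem map_eq_self_of_map_mul_eq_mul_map {R : Type*} [CommRing R] {σ : R →+* R} {a b : R[X]}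
    (hb : b.Monic) (hab : IsCoprime a b) (h : a.map σ * b = a * b.map σ) :
    a.map σ = a ∧ b.map σ = b := by
  have hdvd : b ∣ b.map σ := hab.symm.dvd_of_dvd_mul_left ⟨a.map σ, by rw [← h, mul_comm]⟩
  have hb_eq : b.map σ = b := by
    nontriviality R
    exact eq_of_monic_of_dvd_of_natDegree_le hb (hb.map σ) hdvd (hb.natDegree_map σ).le
  rw [hb_eq] at h
  exact ⟨hb.isRegular.right h, hb_eq⟩

theorem mem_lifts_fixedField_of_map_eq_self {σ : K ≃ₐ[k] K} {P : K[X]}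
    (hP : P.map (σ : K →+* K) = P) :
    P ∈ lifts (algebraMap (fixedField (Subgroup.zpowers σ)) K) := by
  rw [lifts_iff_coeff_lifts]
  intro m
  have hm : σ (P.coeff m) = P.coeff m := by
    simpa only [coeff_map, RingHom.coe_coe] using congrArg (coeff · m) hP
  exact ⟨⟨P.coeff m, mem_fixedField_zpowers_iff.2 hm⟩, rfl⟩

variable [Algebra K L]

theorem exists_monic_isCoprime_eq_aeval_div {s : L} (hs : Transcendental K s) {z : L}
    (hz : z ∈ K⟮s⟯) :
    ∃ a b : K[X], b.Monic ∧ IsCoprime a b ∧ z = aeval s a / aeval s b := by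
  set r := (RatFunc.algEquivOfTranscendental s hs).symm ⟨z, hz⟩ with hr
  refine ⟨r.num, r.denom, r.monic_denom, r.isCoprime_num_denom, ?_⟩
  rw [← RatFunc.algEquivOfTranscendental_apply s hs, hr, AlgEquiv.apply_symm_apply]

variable [IsScalarTower k K L]

instance isScalarTower_bot_intermediateField (F : IntermediateField k K) :
    IsScalarTower k F L :=
  .to₁₂₄ k F K L

theorem restrictScalars_adjoin_fixedField_eq_fixedField {σ : K ≃ₐ[k] K} {τ : L ≃ₐ[k] L}
    (hτ : ∀ a, τ (algebraMap K L a) = algebraMap K L (σ a)) {s : L} (hs : Transcendental K s)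
    (hτs : τ s = s) (htop : K⟮s⟯ = ⊤) :
    ((fixedField (Subgroup.zpowers σ))⟮s⟯).restrictScalars k = fixedField (Subgroup.zpowers τ) := by
  set F := fixedField (Subgroup.zpowers σ)
  have hτ_aeval (P : K[X]) : τ (aeval s P) = aeval s (P.map (σ : K →+* K)) := by
    simpa only [RingHom.coe_coe, hτs] using
      map_aeval_eq_aeval_map (φ := (σ : K →+* K)) (ψ := (τ : L →+* L))
        (RingHom.ext fun a => (hτ a).symm) P s
  refine le_antisymm (fun z hz => ?_) fun z hz => ?_
  · obtain ⟨a, b, rfl⟩ := (mem_adjoin_simple_iff F z).1 hz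
    have hF (P : F[X]) : τ (aeval s P) = aeval s P := by
      have hτF (c : F) : τ (algebraMap F L c) = algebraMap F L c := by
        rw [IsScalarTower.algebraMap_apply F K L, hτ]
        exact congrArg _ (mem_fixedField_zpowers_iff.1 c.2)
      simpa only [RingHom.coe_coe, Polynomial.map_id, hτs] using
        map_aeval_eq_aeval_map (φ := RingHom.id F) (ψ := (τ : L →+* L))
          (RingHom.ext fun c => (hτF c).symm) P s
    rw [mem_fixedField_zpowers_iff, map_div₀, hF, hF]
  · rw [mem_fixedField_zpowers_iff] at hz
    obtain ⟨a, b, hb, hab, rfl⟩ :=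
      exists_monic_isCoprime_eq_aeval_div hs (htop ▸ mem_top : z ∈ K⟮s⟯)
    have aeval_ne_zero {P : K[X]} (hP : P.Monic) : aeval s P ≠ 0 := fun h =>
      hP.ne_zero ((transcendental_iff.1 hs) P h)
    have hcross : a.map (σ : K →+* K) * b = a * b.map (σ : K →+* K) := by
      refine transcendental_iff_injective.1 hs ?_
      rwa [map_div₀, hτ_aeval, hτ_aeval,
        div_eq_div_iff (aeval_ne_zero (hb.map _)) (aeval_ne_zero hb), ← map_mul, ← map_mul] at hz
    obtain ⟨ha_map, hb_map⟩ := map_eq_self_of_map_mul_eq_mul_map hb hab hcross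
    obtain ⟨A, rfl⟩ := (mem_lifts _).1 (mem_lifts_fixedField_of_map_eq_self ha_map)
    obtain ⟨B, rfl⟩ := (mem_lifts _).1 (mem_lifts_fixedField_of_map_eq_self hb_map)
    rw [mem_restrictScalars, mem_adjoin_simple_iff]
    exact ⟨A, B, by rw [aeval_map_algebraMap, aeval_map_algebraMap]⟩

theorem nonempty_algEquiv_fixedField_of_adjoin_eq_top {σ : K ≃ₐ[k] K} {τ : L ≃ₐ[k] L}
    (hτ : ∀ a, τ (algebraMap K L a) = algebraMap K L (σ a)) {s : L} (hs : Transcendental K s)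
    (hτs : τ s = s) (htop : K⟮s⟯ = ⊤) :
    Nonempty (FractionRing (fixedField (Subgroup.zpowers σ))[X] ≃ₐ[k]
      fixedField (Subgroup.zpowers τ)) := by
  set F := fixedField (Subgroup.zpowers σ)
  have hsF : Transcendental F s := hs.restrictScalars (algebraMap F K).injective
  exact ⟨((FractionRing.algEquiv F[X] (RatFunc F)).restrictScalars k).trans <|
    ((RatFunc.algEquivOfTranscendental s hsF).restrictScalars k).trans <|
    equivOfEq (restrictScalars_adjoin_fixedField_eq_fixedField hτ hs hτs htop)⟩

end FixedField

section Generators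

variable {k K L ι : Type*} [Field k] [Field K] [Field L] [Algebra k K] [Algebra k L]

theorem algHom_ext_of_adjoin_eq_top {S : Set K} (hS : adjoin k S = ⊤) {φ ψ : K →ₐ[k] L}
    (h : Set.EqOn φ ψ S) : φ = ψ := by
  have htop : φ.comp topEquiv.toAlgHom = ψ.comp topEquiv.toAlgHom :=
    algHom_ext_of_eq_adjoin _ hS.symm fun _ ha => h ha
  exact AlgHom.ext fun a => DFunLike.congr_fun htop ⟨a, mem_top⟩

theorem exists_algHom_apply_eq {y : ι → K} (hy : AlgebraicIndependent k y)
    (hy_top : adjoin k (Set.range y) = ⊤) {v : ι → L} (hv : AlgebraicIndependent k v) :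
    ∃ φ : K →ₐ[k] L, ∀ i, φ (y i) = v i := by
  let e : FractionRing (MvPolynomial ι k) ≃ₐ[k] K :=
    hy.aevalEquivField.trans ((equivOfEq hy_top).trans topEquiv)
  have he (i : ι) : e.symm (y i) =
      algebraMap (MvPolynomial ι k) (FractionRing (MvPolynomial ι k)) (MvPolynomial.X i) := by
    rw [AlgEquiv.symm_apply_eq]
    exact ((hy.aevalEquivField_algebraMap_apply_coe _).trans (MvPolynomial.aeval_X y i)).symm
  refine ⟨(adjoin k (Set.range v)).val.comp (hv.aevalEquivField.toAlgHom.comp e.symm.toAlgHom),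
    fun i => ?_⟩
  change (hv.aevalEquivField (e.symm (y i)) : L) = v i
  rw [he, AlgebraicIndependent.aevalEquivField_algebraMap_apply_coe, MvPolynomial.aeval_X]

theorem isAlgebraic_adjoin_of_adjoin_eq_top {S : Set K} (hS : IntermediateField.adjoin k S = ⊤) :
    Algebra.IsAlgebraic (Algebra.adjoin k S) K := by
  have : IsFractionRing (Algebra.adjoin k S) K := .of_field _ _ fun z => by
    obtain ⟨a, ha, b, hb, rfl⟩ :=
      IntermediateField.mem_adjoin_iff_div.1 (hS ▸ mem_top : z ∈ IntermediateField.adjoin k S)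
    exact ⟨⟨a, ha⟩, ⟨b, hb⟩, rfl⟩
  exact IsLocalization.isAlgebraic _ (nonZeroDivisors (Algebra.adjoin k S))

theorem isTranscendenceBasis_of_adjoin_eq_top {y : ι → K} (hy : AlgebraicIndependent k y)
    (hy_top : adjoin k (Set.range y) = ⊤) : IsTranscendenceBasis k y :=
  hy.isTranscendenceBasis_iff_isAlgebraic.2 (isAlgebraic_adjoin_of_adjoin_eq_top hy_top)

theorem algebraicIndependent_of_equiv_of_adjoin_eq_top {κ : Type*} [Finite κ] (e : κ ≃ ι)
    {x : ι → L} (hx : AlgebraicIndependent k x) {u : κ → L} (hu : adjoin k (Set.range u) = ⊤) :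
    AlgebraicIndependent k u := by
  have := isAlgebraic_adjoin_of_adjoin_eq_top hu
  have hxe : AlgebraicIndependent k (x ∘ e) := hx.comp e e.injective
  exact (Algebra.IsAlgebraic.isTranscendenceBasis_of_lift_le_trdeg_of_finite k u
    hxe.lift_cardinalMk_le_trdeg).1

theorem transcendental_of_isTranscendenceBasis [Algebra K L] [IsScalarTower k K L] {y : ι → K}
    (hy : IsTranscendenceBasis k y) {s : L} (htop : K⟮s⟯ = ⊤)
    (hs : Transcendental (Algebra.adjoin k (Set.range (algebraMap K L ∘ y))) s) :
    Transcendental K s := by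
  intro halg
  have : Algebra.IsAlgebraic K L := by
    have := isAlgebraic_adjoin_simple halg.isIntegral
    rw [htop] at this
    exact topEquiv.isAlgebraic
  exact hs ((hy.algebraMap_comp (A := L)).isAlgebraic.isAlgebraic s)

theorem adjoin_simple_eq_top_of_adjoin_insert_eq_top [Algebra K L] [IsScalarTower k K L] {y : ι → K}
    {s : L} (h : adjoin k (insert s (Set.range (algebraMap K L ∘ y))) = ⊤) : K⟮s⟯ = ⊤ := by
  rw [← restrictScalars_eq_top_iff (K := k), ← top_le_iff, ← h, adjoin_le_iff]
  rintro _ (rfl | ⟨i, rfl⟩)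
  · exact mem_adjoin_simple_self K _
  · exact K⟮s⟯.algebraMap_mem (y i)

variable [Algebra (MvPolynomial ι k) K] [IsScalarTower k (MvPolynomial ι k) K]
  [IsFractionRing (MvPolynomial ι k) K]

theorem algebraicIndependent_of_eq_algebraMap_X {x : ι → K}
    (hx : ∀ i, x i = algebraMap (MvPolynomial ι k) K (.X i)) : AlgebraicIndependent k x :=
  funext hx ▸ (MvPolynomial.algebraicIndependent_X ι k).map'
    (f := IsScalarTower.toAlgHom k (MvPolynomial ι k) K) (IsFractionRing.injective _ K)

theorem adjoin_range_eq_top_of_eq_algebraMap_X {x : ι → K}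
    (hx : ∀ i, x i = algebraMap (MvPolynomial ι k) K (.X i)) : adjoin k (Set.range x) = ⊤ := by
  have hrange : (IsScalarTower.toAlgHom k (MvPolynomial ι k) K).range =
      Algebra.adjoin k (Set.range x) := by
    rw [← Algebra.map_top, ← MvPolynomial.adjoin_range_X, AlgHom.map_adjoin, ← Set.range_comp,
      funext hx]
    rfl
  rw [← IsFractionRing.algHom_fieldRange_eq_of_comp_eq_of_range_eq (f := AlgHom.id k K) rfl hrange,
    AlgHom.fieldRange_eq_top]
  exact Function.surjective_id

end Generators

section AffineCoordinates

theorem sum_ne_zero_of_algebraicIndependent {ι R A : Type*} [CommRing R] [Nontrivial R]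
    [CommRing A] [Algebra R A] [Fintype ι] [Nonempty ι] {x : ι → A}
    (hx : AlgebraicIndependent R x) : ∑ i, x i ≠ 0 := by
  intro h
  have hli := Fintype.linearIndependent_iff.1 hx.linearIndependent (fun _ => 1)
    (by simpa only [one_smul] using h)
  exact one_ne_zero (hli (Classical.arbitrary ι))

theorem map_sum_eq_self_of_map_eq_perm {ι M F : Type*} [AddCommMonoid M] [FunLike F M M]
    [AddMonoidHomClass F M M] [Fintype ι] {x : ι → M} {τ : F} {e : Equiv.Perm ι}
    (hτ : ∀ i, τ (x i) = x (e i)) : τ (∑ i, x i) = ∑ i, x i := by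
  simp only [map_sum, hτ, Equiv.sum_comp e x]

variable {ι k K L : Type*} [Field k] [Field K] [Field L] [Algebra k K] [Algebra k L]

/-- The affine coordinates `x_j / ∑ i, x_i` of the point with homogeneous coordinates `x`, in the
chart of projective space where `∑ i, x_i` does not vanish. All of them are kept, although they sum
to `1`, so that permutations of `x` act on them by permuting the indices. -/
def affineCoord [Fintype ι] (x : ι → L) (j : ι) : L :=
  x j / ∑ i, x i

theorem sum_affineCoord [Fintype ι] {x : ι → L} (hx : ∑ i, x i ≠ 0) :
    ∑ j, affineCoord x j = 1 := by
  simp only [affineCoord, ← Finset.sum_div, div_self hx]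

theorem affineCoord_mul_sum [Fintype ι] {x : ι → L} (hx : ∑ i, x i ≠ 0) (j : ι) :
    affineCoord x j * ∑ i, x i = x j :=
  div_mul_cancel₀ _ hx

theorem map_affineCoord [Fintype ι] {x : ι → L} {τ : L ≃ₐ[k] L} {e : Equiv.Perm ι}
    (hτ : ∀ i, τ (x i) = x (e i)) (j : ι) : τ (affineCoord x j) = affineCoord x (e j) := by
  simp only [affineCoord, map_div₀, map_sum_eq_self_of_map_eq_perm hτ, hτ]

variable {n : ℕ} {x : Fin (n + 1) → L}

theorem affineCoord_last (hx : ∑ i, x i ≠ 0) :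
    affineCoord x (Fin.last n) = 1 - ∑ i : Fin n, affineCoord x i.castSucc :=
  eq_sub_of_add_eq' (by rw [← Fin.sum_univ_castSucc, sum_affineCoord hx])

theorem adjoin_insert_sum_range_affineCoord (hx : ∑ i, x i ≠ 0)
    (hx_top : adjoin k (Set.range x) = ⊤) :
    adjoin k (insert (∑ i, x i) (Set.range fun i : Fin n => affineCoord x i.castSucc)) = ⊤ := by
  set M := adjoin k (insert (∑ i, x i) (Set.range fun i : Fin n => affineCoord x i.castSucc))
  have hsum : ∑ i, x i ∈ M := subset_adjoin k _ (Set.mem_insert _ _)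
  have hcast (i : Fin n) : affineCoord x i.castSucc ∈ M :=
    subset_adjoin k _ (Set.mem_insert_of_mem _ ⟨i, rfl⟩)
  have hcoord (j : Fin (n + 1)) : affineCoord x j ∈ M := by
    induction j using Fin.lastCases with
    | last => exact affineCoord_last hx ▸ sub_mem (one_mem M) (sum_mem fun i _ => hcast i)
    | cast i => exact hcast i
  rw [← top_le_iff, ← hx_top, adjoin_le_iff]
  rintro _ ⟨j, rfl⟩
  exact affineCoord_mul_sum hx j ▸ mul_mem (hcoord j) hsum

theorem algebraicIndependent_affineCoord_and_transcendental_sum (hx : AlgebraicIndependent k x)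
    (hx_top : adjoin k (Set.range x) = ⊤) :
    AlgebraicIndependent k (fun i : Fin n => affineCoord x i.castSucc) ∧
      Transcendental (Algebra.adjoin k (Set.range fun i : Fin n => affineCoord x i.castSucc))
        (∑ i, x i) := by
  refine AlgebraicIndependent.option_iff.1
    (algebraicIndependent_of_equiv_of_adjoin_eq_top finSuccEquivLast.symm hx ?_)
  rw [Option.range_elim]
  exact adjoin_insert_sum_range_affineCoord (sum_ne_zero_of_algebraicIndependent hx) hx_top

theorem comp_eq_comp_of_affine_of_finRotate {y : Fin n → K} (hy_top : adjoin k (Set.range y) = ⊤)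
    {σ : K ≃ₐ[k] K} (hσ : ∀ i j : Fin n, (j : ℕ) = i + 1 → σ (y i) = y j)
    (hσlast : ∀ i : Fin n, (i : ℕ) = n - 1 → σ (y i) = 1 - ∑ j, y j) (hx : ∑ i, x i ≠ 0)
    {τ : L ≃ₐ[k] L} (hτ : ∀ i, τ (x i) = x (finRotate (n + 1) i)) {φ : K →ₐ[k] L}
    (hφ : ∀ i, φ (y i) = affineCoord x i.castSucc) :
    (τ : L →ₐ[k] L).comp φ = φ.comp (σ : K →ₐ[k] K) := by
  refine algHom_ext_of_adjoin_eq_top hy_top ?_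
  rintro _ ⟨i, rfl⟩
  have hτφ : τ (φ (y i)) = affineCoord x i.succ := by
    rw [hφ, map_affineCoord hτ, finRotate_apply, Fin.coeSucc_eq_succ]
  change τ (φ (y i)) = φ (σ (y i))
  rcases Nat.lt_or_ge (i + 1) n with hi | hi
  · rw [hτφ, hσ i ⟨i + 1, hi⟩ rfl, hφ]
    rfl
  · have hlast : i.succ = Fin.last n := Fin.ext (by simp only [Fin.val_succ, Fin.val_last]; omega)
    rw [hτφ, hlast, affineCoord_last hx, hσlast i (by omega)]
    simp only [map_sub, map_one, map_sum, hφ]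

end AffineCoordinates

theorem stmt4_general {k K L : Type*} [Field k] [Field K] [Field L] [Algebra k K] [Algebra k L]
    {n : ℕ} {y : Fin n → K} (hy : AlgebraicIndependent k y) (hy_top : adjoin k (Set.range y) = ⊤)
    {σ : K ≃ₐ[k] K} (hσ : ∀ i j : Fin n, (j : ℕ) = i + 1 → σ (y i) = y j)
    (hσlast : ∀ i : Fin n, (i : ℕ) = n - 1 → σ (y i) = 1 - ∑ j, y j)
    {x : Fin (n + 1) → L} (hx : AlgebraicIndependent k x) (hx_top : adjoin k (Set.range x) = ⊤)
    {τ : L ≃ₐ[k] L} (hτ : ∀ i j : Fin (n + 1), (j : ℕ) = (i + 1) % (n + 1) → τ (x i) = x j) :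
    Nonempty (FractionRing (fixedField (Subgroup.zpowers σ))[X] ≃ₐ[k]
      fixedField (Subgroup.zpowers τ)) := by
  have hτ_rotate (i : Fin (n + 1)) : τ (x i) = x (finRotate (n + 1) i) := hτ i _ <| by
    rw [finRotate_apply, Fin.val_add, Fin.val_one', Nat.add_mod_mod]
  have hx_sum : ∑ i, x i ≠ 0 := sum_ne_zero_of_algebraicIndependent hx
  obtain ⟨hv, hs⟩ := algebraicIndependent_affineCoord_and_transcendental_sum hx hx_top
  obtain ⟨φ, hφ⟩ := exists_algHom_apply_eq hy hy_top hv
  let _ : Algebra K L := φ.toRingHom.toAlgebra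
  have : IsScalarTower k K L := .of_algebraMap_eq fun r => (φ.commutes r).symm
  have hφy : algebraMap K L ∘ y = fun i => affineCoord x i.castSucc := funext hφ
  have hτφ : (τ : L →ₐ[k] L).comp φ = φ.comp (σ : K →ₐ[k] K) :=
    comp_eq_comp_of_affine_of_finRotate hy_top hσ hσlast hx_sum hτ_rotate hφ
  have htop : K⟮∑ i, x i⟯ = ⊤ := adjoin_simple_eq_top_of_adjoin_insert_eq_top (k := k) (y := y)
    (hφy ▸ adjoin_insert_sum_range_affineCoord hx_sum hx_top)
  have hs_K : Transcendental K (∑ i, x i) := transcendental_of_isTranscendenceBasis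
    (isTranscendenceBasis_of_adjoin_eq_top hy hy_top) htop (hφy ▸ hs)
  exact nonempty_algEquiv_fixedField_of_adjoin_eq_top (DFunLike.congr_fun hτφ) hs_K
    (map_sum_eq_self_of_map_eq_perm hτ_rotate) htop

/-- for `p` an odd prime and `char k ≠ p`, if `σ` is the automorphism
`y₁ ↦ ⋯ ↦ y_{p-1} ↦ 1 - Σ y_i` of `k(y₁,…,y_{p-1})`, then the fixed field
`k(y₁,…,y_{p-1})^⟨σ⟩` with one transcendental `z` adjoined (i.e. its univariate
rational function field) is `k`-isomorphic to `k(C_p)`, the fixed field of the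
cyclic shift `τ` on `k(x₀,…,x_{p-1})`. -/
theorem stmt4 (k : Type*) [Field k] (p : ℕ) (hp : p.Prime) (hodd : Odd p)
    (hchar : ¬ CharP k p)
    (y : Fin (p - 1) → FractionRing (MvPolynomial (Fin (p - 1)) k))
    (hy : ∀ i, y i = algebraMap (MvPolynomial (Fin (p - 1)) k)
      (FractionRing (MvPolynomial (Fin (p - 1)) k)) (MvPolynomial.X i))
    (σ : FractionRing (MvPolynomial (Fin (p - 1)) k) ≃ₐ[k]
         FractionRing (MvPolynomial (Fin (p - 1)) k))
    (hσ : ∀ i j : Fin (p - 1), (j : ℕ) = (i : ℕ) + 1 → σ (y i) = y j)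
    (hσlast : ∀ i : Fin (p - 1), (i : ℕ) = p - 2 → σ (y i) = 1 - ∑ j, y j)
    (x : Fin p → FractionRing (MvPolynomial (Fin p) k))
    (hx : ∀ i, x i = algebraMap (MvPolynomial (Fin p) k)
      (FractionRing (MvPolynomial (Fin p) k)) (MvPolynomial.X i))
    (τ : FractionRing (MvPolynomial (Fin p) k) ≃ₐ[k]
         FractionRing (MvPolynomial (Fin p) k))
    (hτ : ∀ i j : Fin p, (j : ℕ) = ((i : ℕ) + 1) % p → τ (x i) = x j) :
    Nonempty
      (FractionRing (Polynomial (IntermediateField.fixedField (Subgroup.zpowers σ))) ≃ₐ[k]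
       IntermediateField.fixedField (Subgroup.zpowers τ)) := by
  obtain ⟨n, rfl⟩ := Nat.exists_eq_succ_of_ne_zero hp.ne_zero
  exact stmt4_general (n := n)
    (algebraicIndependent_of_eq_algebraMap_X hy :) (adjoin_range_eq_top_of_eq_algebraMap_X hy :)
    hσ hσlast
    (algebraicIndependent_of_eq_algebraMap_X hx :) (adjoin_range_eq_top_of_eq_algebraMap_X hx :) hτ
end

section
/- Let k be a field, n a positive integer, d an integer with gcd(d,n)=1, and K := k(t,s,x₀,…,x_{n-1}) a field with trdeg_k K = n+1 and t^d = x₀x₁⋯x_{n-1}. Let G ≤ S_n and χ: G → k^× a homomorphism with χ^d = 1, with G acting on K by k-automorphisms via σ·t = χ(σ)t, σ·s = s, σ·x_i = x_{σ(i)}. Then there exists u ∈ K fixed by G such that K^G = k(x₀/s, x₁/s, …, x_{n-1}/s)^G (u). -/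
set_option maxHeartbeats 1000000
set_option synthInstance.maxHeartbeats 400000

/-!
Let `L = k(x₀/s, …, x_{n-1}/s)` and choose integers with `a d + b n = 1`. By Dedekind's independence
of characters some sum `l = ∑ g, χ(g)^b · g(c)` with `c ∈ L` is nonzero; it satisfies
`g(l) = χ(g)^(-b) l`, so `u = s^a t^b l` is fixed by `G`. The monomials `s^a t^b` and
`s^(-n) t^d = ∏ xᵢ/s` have exponent matrix of determinant one, so both `s` and `t` lie in `L(u)`,
and `K = L(u)`.

To descend from `K = L(u)` to `K^G = L^G(u)`, note that `L` is algebraic over `L^G`, so that `L`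
spans `K` over `L^G(u)`. Choose `c ∈ L` with nonzero trace `tr c = ∑ g, g(c)`. The trace is linear
over `L^G(u)` and maps `L` to `L^G`, so `(tr c) f = tr (c f)` lies in `L^G(u)` for every `f ∈ K^G`.
-/

open IntermediateField

section SemiInvariants

theorem exists_sum_mul_ne_zero_of_injective {ι M R : Type*} [Fintype ι] [Monoid M] [CommRing R]
    [IsDomain R] {τ : ι → M →* R} (hτ : Function.Injective τ) {a : ι → R} (ha : a ≠ 0) :
    ∃ c : M, ∑ i, a i * τ i c ≠ 0 := by
  by_contra! h
  have hli := (linearIndependent_monoidHom M R).comp τ hτ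
  refine ha (funext (Fintype.linearIndependent_iff.1 hli a (funext fun c => ?_)))
  simpa using h c

variable {k K : Type*} [Field k] [Field K] [Algebra k K] {L : IntermediateField k K}

theorem exists_mem_sum_mul_apply_ne_zero {G : Type*} [Group G] [Fintype G] {φ : G →* Gal(K/k)}
    (hφ : ∀ g, (∀ l ∈ L, φ g l = l) → g = 1) {a : G → K} (ha : a ≠ 0) :
    ∃ c ∈ L, ∑ g, a g * φ g c ≠ 0 := by
  let τ : G → L →* K := fun g => (φ g : K →* K).comp (L.val : L →* K)
  have hτ : Function.Injective τ := fun g h hgh => by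
    refine (inv_mul_eq_one.1 (hφ (h⁻¹ * g) fun l hl => ?_)).symm
    have hl' : φ g l = φ h l := DFunLike.congr_fun hgh ⟨l, hl⟩
    rw [map_mul, AlgEquiv.mul_apply, hl', map_inv, AlgEquiv.aut_inv, AlgEquiv.symm_apply_apply]
  obtain ⟨c, hc⟩ := exists_sum_mul_ne_zero_of_injective hτ ha
  exact ⟨c, c.2, hc⟩

theorem exists_ne_zero_forall_apply_eq_smul {G : Type*} [Group G] [Finite G] {φ : G →* Gal(K/k)}
    (hL : ∀ g, ∀ l ∈ L, φ g l ∈ L) (hφ : ∀ g, (∀ l ∈ L, φ g l = l) → g = 1) (ψ : G →* kˣ) :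
    ∃ l ∈ L, l ≠ 0 ∧ ∀ g, φ g l = (ψ g : k) • l := by
  have := Fintype.ofFinite G
  obtain ⟨c, hc, hne⟩ := exists_mem_sum_mul_apply_ne_zero hφ
    (a := fun g => algebraMap k K (ψ g⁻¹)) (Function.ne_iff.2 ⟨1, by simp⟩)
  refine ⟨_, sum_mem fun g _ => mul_mem (L.algebraMap_mem _) (hL g c hc), hne, fun h => ?_⟩
  rw [map_sum, Finset.smul_sum]
  refine Fintype.sum_equiv (Equiv.mulLeft h) _ _ fun g => ?_
  simp only [Equiv.coe_mulLeft, ← Algebra.smul_def, map_smul, smul_smul, ← Units.val_mul,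
    ← map_mul ψ, mul_inv_rev, map_mul φ, AlgEquiv.mul_apply]
  rw [map_mul ψ h, map_mul ψ, mul_comm (ψ g⁻¹), ← mul_assoc, ← map_mul, mul_inv_cancel, map_one,
    one_mul]

end SemiInvariants

section Descent

variable {k K : Type*} [Field k] [Field K] [Algebra k K]

theorem sum_apply_mem_fixedField (H : Subgroup Gal(K/k)) [Fintype H] (y : K) :
    ∑ h : H, (h : Gal(K/k)) y ∈ fixedField H := by
  refine (mem_fixedField_iff H _).2 fun f hf => ?_
  rw [map_sum]
  exact Fintype.sum_equiv (Equiv.mulLeft ⟨f, hf⟩) _ _ fun h => rfl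

variable {L M : IntermediateField k K}

theorem span_eq_top_of_sup_eq_top (hLM : L ⊔ M = ⊤) (halg : ∀ l ∈ L, IsAlgebraic M l) :
    Submodule.span M (L : Set K) = ⊤ := by
  have hadjoin : adjoin M (L : Set K) = ⊤ := by
    have hle : L ⊔ M ≤ (adjoin M (L : Set K)).restrictScalars k :=
      sup_le (fun _ hl => subset_adjoin M _ hl)
        fun m hm => (adjoin M (L : Set K)).algebraMap_mem ⟨m, hm⟩
    exact top_le_iff.1 fun y _ => hle (hLM ▸ mem_top)
  rw [adjoin_eq_top_iff_of_isAlgebraic halg] at hadjoin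
  have hclosure : Submonoid.closure (L : Set K) = L.toSubfield.toSubmonoid :=
    Submonoid.closure_eq L.toSubfield.toSubmonoid
  have hspan := Algebra.adjoin_eq_span M (L : Set K)
  rw [hadjoin, hclosure, Algebra.top_toSubmodule] at hspan
  exact hspan.symm

variable {H : Subgroup Gal(K/k)}

theorem eq_one_of_forall_apply_eq_self (hLM : L ⊔ M = ⊤) (hM : M ≤ fixedField H) {h : Gal(K/k)}
    (hH : h ∈ H) (hfix : ∀ l ∈ L, h l = l) : h = 1 := by
  have hmem : h ∈ L.fixingSubgroup ⊓ M.fixingSubgroup :=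
    ⟨(mem_fixingSubgroup_iff _ _).2 hfix, (le_iff_le H M).1 hM hH⟩
  rwa [← fixingSubgroup_sup, hLM, fixingSubgroup_top] at hmem

theorem sum_apply_mem_of_mem_span [Fintype H] (hM : M ≤ fixedField H) {S : Set K}
    (hS : ∀ z ∈ S, ∑ h : H, (h : Gal(K/k)) z ∈ M) {y : K} (hy : y ∈ Submodule.span M S) :
    ∑ h : H, (h : Gal(K/k)) y ∈ M := by
  induction hy using Submodule.span_induction with
  | mem z hz => exact hS z hz
  | zero => simp
  | add y z _ _ hy hz => simpa only [map_add, Finset.sum_add_distrib] using add_mem hy hz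
  | smul m y _ hy =>
    have hm (h : H) : (h : Gal(K/k)) (m • y) = m * (h : Gal(K/k)) y := by
      rw [show m • y = m * y from rfl, map_mul, (mem_fixedField_iff H _).1 (hM m.2) h h.2]
    simpa only [hm, ← Finset.mul_sum] using mul_mem m.2 hy

variable [Finite H]

theorem isAlgebraic_of_fixedField_inf_le (hL : ∀ h ∈ H, ∀ l ∈ L, h l ∈ L)
    (hM : fixedField H ⊓ L ≤ M) {l : K} (hl : l ∈ L) : IsAlgebraic M l := by
  have := Fintype.ofFinite H
  let p := MulSemiringAction.charpoly H l
  have hpL : p ∈ Polynomial.lifts (algebraMap L K) :=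
    Subsemiring.prod_mem _ fun h _ => (Polynomial.mem_lifts _).2
      ⟨Polynomial.X - Polynomial.C ⟨h • l, hL h h.2 l hl⟩, by simp⟩
  have hpM : p ∈ Polynomial.lifts (algebraMap M K) := by
    rw [Polynomial.lifts_iff_coeff_lifts] at hpL ⊢
    intro i
    obtain ⟨a, ha⟩ := hpL i
    have hfix : p.coeff i ∈ fixedField H := fun h => MulSemiringAction.smul_coeff_charpoly l i h
    exact ⟨⟨p.coeff i, hM ⟨hfix, ha ▸ a.2⟩⟩, rfl⟩
  obtain ⟨q, hq, -, hmonic⟩ :=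
    Polynomial.lifts_and_natDegree_eq_and_monic hpM (MulSemiringAction.monic_charpoly H l)
  refine ⟨q, hmonic.ne_zero, ?_⟩
  rw [← Polynomial.eval_map_algebraMap, hq]
  exact MulSemiringAction.eval_charpoly H l

theorem fixedField_eq_of_sup_eq_top (hL : ∀ h ∈ H, ∀ l ∈ L, h l ∈ L) (hLM : L ⊔ M = ⊤)
    (hinf : fixedField H ⊓ L ≤ M) (hM : M ≤ fixedField H) : fixedField H = M := by
  have := Fintype.ofFinite H
  refine le_antisymm (fun f hf => ?_) hM
  have htr : ∀ l ∈ L, ∑ h : H, (h : Gal(K/k)) l ∈ M := fun l hl =>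
    hinf ⟨sum_apply_mem_fixedField H l, sum_mem fun h _ => hL h h.2 l hl⟩
  have hspan : Submodule.span M (L : Set K) = ⊤ :=
    span_eq_top_of_sup_eq_top hLM fun _ => isAlgebraic_of_fixedField_inf_le hL hinf
  obtain ⟨c, hc, hc0⟩ := exists_mem_sum_mul_apply_ne_zero (φ := H.subtype)
    (fun h hh => Subtype.ext (eq_one_of_forall_apply_eq_self hLM hM h.2 hh))
    (one_ne_zero (α := H → K))
  simp only [Pi.one_apply, one_mul, Subgroup.subtype_apply] at hc0
  have hcf : (∑ h : H, (h : Gal(K/k)) c) * f ∈ M := by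
    have hmem : ∑ h : H, (h : Gal(K/k)) (c * f) ∈ M :=
      sum_apply_mem_of_mem_span hM htr (by simp [hspan])
    simpa only [map_mul, (mem_fixedField_iff H _).1 hf _ (Subtype.prop _), ← Finset.sum_mul]
      using hmem
  simpa [hc0] using div_mem hcf (htr c hc)

theorem fixedField_range_eq_inf_sup_adjoin_simple {G : Type*} [Group G] [Finite G]
    {φ : G →* Gal(K/k)} (hL : ∀ g, ∀ l ∈ L, φ g l ∈ L) {u : K} (hu : ∀ g, φ g u = u)
    (htop : L ⊔ adjoin k {u} = ⊤) :
    fixedField φ.range = (fixedField φ.range ⊓ L) ⊔ adjoin k {u} := by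
  have : Finite φ.range := Finite.of_surjective _ φ.rangeRestrict_surjective
  refine fixedField_eq_of_sup_eq_top (L := L) ?_ ?_ le_sup_left ?_
  · rintro _ ⟨g, rfl⟩
    exact hL g
  · rw [← top_le_iff, ← htop]
    exact sup_le_sup_left le_sup_right L
  · refine sup_le inf_le_left (adjoin_simple_le_iff.2 ((mem_fixedField_iff _ _).2 ?_))
    rintro _ ⟨g, rfl⟩
    exact hu g

end Descent

section Generation

theorem zpow_mul_zpow_mul_zpow_mul_zpow {α : Type*} [CommGroupWithZero α] {s t : α} (hs : s ≠ 0)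
    (ht : t ≠ 0) (a b c d i j : ℤ) :
    (s ^ a * t ^ b) ^ i * (s ^ c * t ^ d) ^ j = s ^ (a * i + c * j) * t ^ (b * i + d * j) := by
  simp only [mul_zpow, ← zpow_mul, zpow_add₀ hs, zpow_add₀ ht]
  exact mul_mul_mul_comm _ _ _ _

theorem mem_and_mem_of_zpow_mul_zpow_mem {K S : Type*} [Field K] [SetLike S K] [SubfieldClass S K]
    {N : S} {s t : K} (hs : s ≠ 0) (ht : t ≠ 0) {a b c d : ℤ} (hdet : a * d - b * c = 1)
    (hab : s ^ a * t ^ b ∈ N) (hcd : s ^ c * t ^ d ∈ N) : s ∈ N ∧ t ∈ N := by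
  have hmem := fun i j => mul_mem (zpow_mem hab i) (zpow_mem hcd j)
  simp only [zpow_mul_zpow_mul_zpow_mul_zpow hs ht] at hmem
  constructor
  · have := hmem d (-b)
    rwa [show a * d + c * -b = 1 by linear_combination hdet, show b * d + d * -b = 0 by ring,
      zpow_one, zpow_zero, mul_one] at this
  · have := hmem (-c) a
    rwa [show a * -c + c * a = 0 by ring, show b * -c + d * a = 1 by linear_combination hdet,
      zpow_one, zpow_zero, one_mul] at this

variable {k K : Type*} [Field k] [Field K] [Algebra k K]

theorem apply_mem_adjoin_of_mapsTo {σ : Gal(K/k)} {S : Set K} (hσ : Set.MapsTo σ S S) {l : K}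
    (hl : l ∈ adjoin k S) : σ l ∈ adjoin k S := by
  have hmem : σ l ∈ (adjoin k S).map (σ : K →ₐ[k] K) := ⟨l, hl, rfl⟩
  rw [adjoin_map] at hmem
  exact adjoin.mono k _ _ hσ.image_subset hmem

theorem adjoin_div_sup_adjoin_eq_top {ι : Type*} [Fintype ι] {a b d : ℤ}
    (hab : a * d + b * Fintype.card ι = 1) {s t : K} (hs : s ≠ 0) (ht : t ≠ 0) {x : ι → K}
    (hrel : t ^ d = ∏ i, x i) (hgen : adjoin k ({t, s} ∪ Set.range x) = ⊤) {l : K}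
    (hl : l ∈ adjoin k (Set.range fun i => x i / s)) (hl0 : l ≠ 0) :
    adjoin k (Set.range fun i => x i / s) ⊔ adjoin k {s ^ a * t ^ b * l} = ⊤ := by
  set N := adjoin k (Set.range fun i => x i / s) ⊔ adjoin k {s ^ a * t ^ b * l}
  have hx : ∀ i, x i / s ∈ N := fun i =>
    (le_sup_left : _ ≤ N) (subset_adjoin k _ ⟨i, rfl⟩)
  have hst : s ^ a * t ^ b ∈ N := by
    have hu : s ^ a * t ^ b * l ∈ N := (le_sup_right : _ ≤ N) (mem_adjoin_simple_self k _)
    simpa [hl0] using div_mem hu ((le_sup_left : _ ≤ N) hl)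
  have hprod : s ^ (-(Fintype.card ι : ℤ)) * t ^ d ∈ N := by
    have := prod_mem (S := N) fun i (_ : i ∈ Finset.univ) => hx i
    rwa [Finset.prod_div_distrib, ← hrel, Finset.prod_const, Finset.card_univ, div_eq_inv_mul,
      ← zpow_natCast, ← zpow_neg] at this
  obtain ⟨hsN, htN⟩ := mem_and_mem_of_zpow_mul_zpow_mem hs ht
    (by linear_combination hab) hst hprod
  rw [← top_le_iff, ← hgen, adjoin_le_iff]
  rintro _ ((rfl | rfl) | ⟨i, rfl⟩)
  · exact htN
  · exact hsN
  · simpa [hs] using mul_mem (hx i) hsN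

end Generation

section Nondegeneracy

theorem isAlgebraic_of_isAlgebraic_zpow {R K : Type*} [CommRing R] [Field K] [Algebra R K]
    {t : K} {d : ℤ} (hd : d ≠ 0) (h : IsAlgebraic R (t ^ d)) : IsAlgebraic R t := by
  obtain ⟨m, rfl | rfl⟩ := d.eq_nat_or_neg
  · rw [zpow_natCast] at h
    exact h.of_pow (by lia)
  · rw [zpow_neg, zpow_natCast, IsAlgebraic.inv_iff] at h
    exact h.of_pow (by lia)

variable {k K : Type*} [Field k] [Field K] [Algebra k K]

theorem isTranscendenceBasis_of_isAlgebraic_of_adjoin_eq_top {ι : Type*} [Finite ι] {b y : ι → K}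
    (hb : IsTranscendenceBasis k b) {T : Set K} (hT : adjoin k T = ⊤)
    (hy : ∀ z ∈ T, IsAlgebraic (adjoin k (Set.range y)) z) : IsTranscendenceBasis k y := by
  have htop : ⊤ ≤ (algebraicClosure (adjoin k (Set.range y)) K).restrictScalars k := by
    rw [← hT, adjoin_le_iff]
    exact fun z hz => mem_algebraicClosure_iff.2 (hy z hz)
  have halg : Algebra.IsAlgebraic (adjoin k (Set.range y)) K :=
    ⟨fun z => mem_algebraicClosure_iff.1 (htop mem_top)⟩
  rw [isAlgebraic_adjoin_iff_top] at halg
  exact Algebra.IsAlgebraic.isTranscendenceBasis_of_lift_le_trdeg_of_finite k y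
    hb.lift_cardinalMk_eq_trdeg.le

variable {n : ℕ} {d : ℤ} {t s : K} {x : Fin n → K} {b : Fin (n + 1) → K}

theorem isTranscendenceBasis_cons_of_zpow_eq_prod (hb : IsTranscendenceBasis k b) (hd : d ≠ 0)
    (hrel : t ^ d = ∏ i, x i) (hgen : adjoin k ({t, s} ∪ Set.range x) = ⊤) :
    IsTranscendenceBasis k (Fin.cons s x : Fin (n + 1) → K) := by
  let F := adjoin k (Set.range (Fin.cons s x : Fin (n + 1) → K))
  have hF : ∀ z ∈ F, IsAlgebraic F z := fun z hz => isAlgebraic_algebraMap (⟨z, hz⟩ : F)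
  have hs : s ∈ F := subset_adjoin k _ ⟨0, rfl⟩
  have hx : ∀ i, x i ∈ F := fun i => subset_adjoin k _ ⟨i.succ, rfl⟩
  refine isTranscendenceBasis_of_isAlgebraic_of_adjoin_eq_top hb hgen ?_
  rintro _ ((rfl | rfl) | ⟨i, rfl⟩)
  · exact isAlgebraic_of_isAlgebraic_zpow hd (hF _ (hrel ▸ prod_mem fun i _ => hx i))
  · exact hF _ hs
  · exact hF _ (hx i)

theorem ne_zero_and_injective_of_isTranscendenceBasis (hb : IsTranscendenceBasis k b)
    (hd : IsCoprime d (n : ℤ)) (hrel : t ^ d = ∏ i, x i)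
    (hgen : adjoin k ({t, s} ∪ Set.range x) = ⊤) :
    t ≠ 0 ∧ s ≠ 0 ∧ Function.Injective x := by
  rcases eq_or_ne d 0 with rfl | hd0
  · obtain rfl : n = 1 := Int.isUnit_iff.1 (isCoprime_zero_left.1 hd) |>.elim (by lia) (by lia)
    have hx : x = 1 := funext fun i => by
      simpa [Subsingleton.elim i 0] using hrel.symm
    have hgen' : adjoin k ({t, s} ∪ Set.range ![t]) = ⊤ := by
      rw [← top_le_iff, ← hgen, adjoin_le_iff, Set.union_subset_iff]
      refine ⟨Set.subset_union_left.trans (subset_adjoin k _), ?_⟩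
      rintro _ ⟨i, rfl⟩
      exact hx ▸ one_mem _
    have hst := (isTranscendenceBasis_cons_of_zpow_eq_prod hb one_ne_zero (by simp) hgen').1
    exact ⟨hst.ne_zero 1, hst.ne_zero 0, Function.injective_of_subsingleton x⟩
  · have hsx := (isTranscendenceBasis_cons_of_zpow_eq_prod hb hd0 hrel hgen).1
    refine ⟨?_, hsx.ne_zero 0, (Fin.cons_injective_iff.1 hsx.injective).2⟩
    rintro rfl
    rw [zero_zpow d hd0, eq_comm, Finset.prod_eq_zero_iff] at hrel
    obtain ⟨i, -, hi⟩ := hrel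
    exact hsx.ne_zero i.succ hi

end Nondegeneracy

theorem stmt5_general (k K ι G : Type*) [Field k] [Field K] [Algebra k K] [Fintype ι]
    [Group G] [MulAction G ι] [FaithfulSMul G ι] (d : ℤ) (hd : IsCoprime d (Fintype.card ι : ℤ))
    (t s : K) (x : ι → K) (ht : t ≠ 0) (hs : s ≠ 0) (hx : Function.Injective x)
    (hrel : t ^ d = ∏ i, x i)
    (hgen : adjoin k ({t, s} ∪ Set.range x) = ⊤)
    (φ : G →* (K ≃ₐ[k] K)) (χ : G →* kˣ)
    (hφt : ∀ g : G, φ g t = (χ g : k) • t)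
    (hφs : ∀ g : G, φ g s = s)
    (hφx : ∀ (g : G) (i : ι), φ g (x i) = x (g • i)) :
    ∃ u : K, (∀ g : G, φ g u = u) ∧
      fixedField φ.range =
        (fixedField φ.range ⊓ adjoin k (Set.range fun i => x i / s)) ⊔ adjoin k {u} := by
  have : Finite G := Finite.of_injective _ (MulAction.toPerm_injective (α := G) (β := ι))
  let L := adjoin k (Set.range fun i => x i / s)
  have hφL : ∀ g i, φ g (x i / s) = x (g • i) / s := fun g i => by rw [map_div₀, hφx, hφs]
  have hL : ∀ g, ∀ l ∈ L, φ g l ∈ L := fun g l =>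
    apply_mem_adjoin_of_mapsTo (Set.forall_mem_range.2 fun i => ⟨g • i, (hφL g i).symm⟩)
  have hfaithful : ∀ g, (∀ l ∈ L, φ g l = l) → g = 1 := fun g hg =>
    eq_of_smul_eq_smul fun i => hx <| by
      simpa [hφL, hs, div_left_inj'] using hg _ (subset_adjoin k _ ⟨i, rfl⟩)
  obtain ⟨a, b, hab⟩ := hd
  obtain ⟨l, hl, hl0, hφl⟩ := exists_ne_zero_forall_apply_eq_smul hL hfaithful (χ ^ (-b))
  have hu : ∀ g, φ g (s ^ a * t ^ b * l) = s ^ a * t ^ b * l := fun g => by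
    have hχ : algebraMap k K (χ g) ^ b ≠ 0 := zpow_ne_zero b (by simp)
    simp only [map_mul, map_zpow₀, hφs, hφt, hφl, Algebra.smul_def, mul_zpow,
      MonoidHom.zpow_apply, Units.val_zpow_eq_zpow_val]
    rw [zpow_neg]
    field_simp
  exact ⟨_, hu, fixedField_range_eq_inf_sup_adjoin_simple hL hu
    (adjoin_div_sup_adjoin_eq_top hab hs ht hrel hgen hl hl0)⟩

/-- Theorem 1.5: let `K = k(t,s,x₀,…,x_{n-1})` with
`trdeg_k K = n+1` and `t^d = x₀⋯x_{n-1}` where `gcd(d,n) = 1`.  If `G ≤ S_n`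
acts by `k`-automorphisms via `σ·t = χ(σ)t`, `σ·s = s`, `σ·x_i = x_{σ(i)}`
for a character `χ : G → kˣ` with `χ^d = 1`, then there is a `G`-fixed `u ∈ K`
with `K^G = k(x₀/s, …, x_{n-1}/s)^G (u)`. -/
theorem stmt5 (k K : Type*) [Field k] [Field K] [Algebra k K]
    (n : ℕ) (hn : 0 < n) (d : ℤ) (hd : IsCoprime d (n : ℤ))
    (t s : K) (x : Fin n → K)
    (hrel : t ^ d = ∏ i, x i)
    (hgen : IntermediateField.adjoin k ({t, s} ∪ Set.range x) = ⊤)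
    (htrdeg : ∃ b : Fin (n + 1) → K, IsTranscendenceBasis k b)
    (G : Subgroup (Equiv.Perm (Fin n)))
    (φ : G →* (K ≃ₐ[k] K)) (χ : G →* kˣ)
    (hχ : ∀ g : G, (χ g) ^ d = 1)
    (hφt : ∀ g : G, φ g t = ((χ g : k)) • t)
    (hφs : ∀ g : G, φ g s = s)
    (hφx : ∀ (g : G) (i : Fin n), φ g (x i) = x ((g : Equiv.Perm (Fin n)) i)) :
    ∃ u : K, (∀ g : G, φ g u = u) ∧
      IntermediateField.fixedField φ.range =
        (IntermediateField.fixedField φ.range ⊓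
          IntermediateField.adjoin k (Set.range fun i => x i / s)) ⊔
        IntermediateField.adjoin k {u} := by
  obtain ⟨b, hb⟩ := htrdeg
  obtain ⟨ht, hs, hx⟩ := ne_zero_and_injective_of_isTranscendenceBasis hb hd hrel hgen
  exact stmt5_general k K (Fin n) G d (by simpa using hd) t s x ht hs hx hrel hgen φ χ hφt hφs hφx
end
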